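/- Fix p equal to 0 or a prime number. Any two proper pairs of algebraically closed fields of characteristic p are elementarily equivalent: if (M, P(M)) and (M', P(M')) are structures in the language of rings expanded by a unary predicate P, where M and M' are algebraically closed fields of characteristic p and P(M), P(M') are proper algebraically closed subfields of M, M' respectively, then (M, P(M)) and (M', P(M')) satisfy the same sentences. In particular, the theory of proper pairs of algebraically closed fields of a fixed characteristic is complete. -/

import Mathlib

open FirstOrder FirstOrder.Language

/-- The language of rings `{0, 1, +, −, ×}` together with an additional unary predicate
symbol `P`: constants indexed by `Fin 2` (`0` and `1`), a unary function symbol (negation),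
binary function symbols indexed by `Fin 2` (`+` and `×`), and a unary relation symbol `P`. -/
def LRingP : FirstOrder.Language where
  Functions := fun n =>
    match n with
    | 0 => Fin 2
    | 1 => Unit
    | 2 => Fin 2
    | _ => Empty
  Relations := fun n =>
    match n with
    | 1 => Unit
    | _ => Empty

/-- The `L_P`-structure of a pair `(M, P)` where `M` is a field and `P ⊆ M`. -/
def ringPairStr (M : Type*) [Field M] (P : Set M) : LRingP.Structure M where
  funMap {n} :=
    match n with
    | 0 => fun c _ => if (show Fin 2 from c) = 0 then 0 else 1
    | 1 => fun _ x => -x 0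
    | 2 => fun f x => if (show Fin 2 from f) = 0 then x 0 + x 1 else x 0 * x 1
    | _ + 3 => fun f _ => nomatch f
  RelMap {n} :=
    match n with
    | 0 => fun r _ => nomatch r
    | 1 => fun _ x => x 0 ∈ P
    | _ + 2 => fun r _ => nomatch r


namespace PairACF

/-- Two countable algebraically closed extensions of `R` of infinite transcendence degree are
isomorphic over `R`. -/
theorem exists_basis_nat {R E : Type} [CommRing R] [Field E] [Algebra R E] [Countable E]
    (a : ℕ → E) (ha : AlgebraicIndependent R a) :
    ∃ v : ℕ → E, IsTranscendenceBasis R v := by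
  obtain ⟨t, hst, ht⟩ := exists_isTranscendenceBasis_superset (s := Set.range a) ha.coe_range
  have : Nontrivial R := RingHom.domain_nontrivial (algebraMap R E)
  have hinf : (Set.range a).Infinite := Set.infinite_range_of_injective ha.injective
  have : Infinite t := (hinf.mono hst).to_subtype
  obtain ⟨e⟩ := nonempty_equiv_of_countable (α := ℕ) (β := t)
  exact ⟨_, ht.comp_equiv e⟩

theorem exists_equiv {R E E' : Type} [CommRing R] [Field E] [Field E'] [Algebra R E] [Algebra R E']
    [IsAlgClosed E] [IsAlgClosed E'] [Countable E] [Countable E']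
    (a : ℕ → E) (ha : AlgebraicIndependent R a) (a' : ℕ → E') (ha' : AlgebraicIndependent R a') :
    ∃ f : E ≃+* E', ∀ r, f (algebraMap R E r) = algebraMap R E' r := by
  obtain ⟨v, hv⟩ := exists_basis_nat a ha
  obtain ⟨w, hw⟩ := exists_basis_nat a' ha'
  let := IsAlgClosed.isAlgClosure_of_transcendence_basis v hv
  let := IsAlgClosed.isAlgClosure_of_transcendence_basis w hw
  let e : Algebra.adjoin R (Set.range v) ≃ₐ[R] Algebra.adjoin R (Set.range w) :=
    hv.1.aevalEquiv.symm.trans hw.1.aevalEquiv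
  refine ⟨IsAlgClosure.equivOfEquiv E E' e.toRingEquiv, fun r => ?_⟩
  have h1 : algebraMap R E r =
      algebraMap (Algebra.adjoin R (Set.range v)) E (algebraMap R _ r) := rfl
  rw [h1, IsAlgClosure.equivOfEquiv_algebraMap]
  have h2 : e.toRingEquiv (algebraMap R _ r) = algebraMap R _ r := e.commutes r
  rw [h2]
  rfl

theorem exists_pair_equiv {R F E F' E' : Type} [CommRing R] [Field F] [Field E] [Field F']
    [Field E'] [Algebra F E] [Algebra F' E'] [Algebra R F] [Algebra R F']
    [IsAlgClosed F] [IsAlgClosed F'] [IsAlgClosed E] [IsAlgClosed E']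
    [Countable E] [Countable E']
    (a : ℕ → F) (ha : AlgebraicIndependent R a) (a' : ℕ → F') (ha' : AlgebraicIndependent R a')
    (b : ℕ → E) (hb : AlgebraicIndependent F b) (b' : ℕ → E') (hb' : AlgebraicIndependent F' b') :
    ∃ f : E ≃+* E', ∀ x, x ∈ Set.range (algebraMap F E) ↔ f x ∈ Set.range (algebraMap F' E') := by
  have : Countable F := (algebraMap F E).injective.countable
  have : Countable F' := (algebraMap F' E').injective.countable
  obtain ⟨g, -⟩ := exists_equiv a ha a' ha'
  let : Algebra F E' := ((algebraMap F' E').comp g.toRingHom).toAlgebra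
  have hb'' : AlgebraicIndependent F b' :=
    AlgebraicIndependent.of_ringHom_of_comp_eq g.toRingHom (RingHom.id E') hb' g.injective rfl
  obtain ⟨f, hf⟩ := exists_equiv b hb b' hb''
  refine ⟨f, fun x => ⟨?_, ?_⟩⟩
  · rintro ⟨y, rfl⟩
    exact ⟨g y, (hf y).symm⟩
  · rintro ⟨y, hy⟩
    refine ⟨g.symm y, f.injective ?_⟩
    rw [hf, ← hy]
    change algebraMap F' E' (g (g.symm y)) = _
    simp

/-- Kronecker substitution: uniqueness of base `B` digits. -/
theorem digits_inj (B : ℕ) (N : ℕ) : ∀ (d e : ℕ → ℕ), (∀ i, d i < B) → (∀ i, e i < B) →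
    ∑ i ∈ Finset.range N, d i * B ^ i = ∑ i ∈ Finset.range N, e i * B ^ i →
    ∀ i < N, d i = e i := by
  induction N with
  | zero => intro d e _ _ _ i hi; omega
  | succ N ih =>
    intro d e hd he h i hi
    have hB : 0 < B := lt_of_le_of_lt (Nat.zero_le _) (hd 0)
    rw [Finset.sum_range_succ', Finset.sum_range_succ'] at h
    have key : ∀ d : ℕ → ℕ, ∑ i ∈ Finset.range N, d (i + 1) * B ^ (i + 1) =
        B * ∑ i ∈ Finset.range N, d (i + 1) * B ^ i := by
      intro d
      rw [Finset.mul_sum]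
      exact Finset.sum_congr rfl fun i _ => by ring
    rw [key, key] at h
    simp only [pow_zero, mul_one] at h
    have h0 : d 0 = e 0 := by
      have := congrArg (· % B) h
      simpa [Nat.mul_add_mod, Nat.mod_eq_of_lt (hd 0), Nat.mod_eq_of_lt (he 0)] using this
    have h1 : ∑ i ∈ Finset.range N, d (i + 1) * B ^ i = ∑ i ∈ Finset.range N, e (i + 1) * B ^ i := by
      rw [h0] at h
      exact Nat.eq_of_mul_eq_mul_left hB (Nat.add_right_cancel h)
    cases i with
    | zero => exact h0
    | succ i =>
      exact ih (fun i => d (i + 1)) (fun i => e (i + 1)) (fun i => hd _) (fun i => he _)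
        h1 i (by omega)

theorem digits_inj' (B : ℕ) (d e : ℕ →₀ ℕ) (hd : ∀ i, d i < B) (he : ∀ i, e i < B)
    (h : d.sum (fun i k => k * B ^ i) = e.sum (fun i k => k * B ^ i)) : d = e := by
  obtain ⟨N, hN⟩ := (d.support ∪ e.support).exists_nat_subset_range
  have h1 : d.support ⊆ Finset.range N := Finset.subset_union_left.trans hN
  have h2 : e.support ⊆ Finset.range N := Finset.subset_union_right.trans hN
  rw [Finsupp.sum_of_support_subset d h1 _ (by simp),
    Finsupp.sum_of_support_subset e h2 _ (by simp)] at h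
  ext i
  by_cases hi : i < N
  · exact digits_inj B N d e hd he h i hi
  · rw [Finsupp.notMem_support_iff.mp fun h => hi (Finset.mem_range.mp (h1 h)),
      Finsupp.notMem_support_iff.mp fun h => hi (Finset.mem_range.mp (h2 h))]

theorem kronecker {K M : Type} [Field K] [Field M] [Algebra K M] (t : M) (ht : Transcendental K t)
    (B : ℕ) (P : MvPolynomial ℕ K) (hP : ∀ d ∈ P.support, ∀ i, d i < B)
    (h0 : MvPolynomial.aeval (fun i => t ^ (B ^ i)) P = 0) : P = 0 := by
  have h1 : Polynomial.aeval t
      (∑ d ∈ P.support, Polynomial.monomial (d.sum fun i k => k * B ^ i) (P.coeff d)) = 0 := by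
    rw [← h0, MvPolynomial.aeval_def, MvPolynomial.eval₂_eq, map_sum]
    refine Finset.sum_congr rfl fun d _ => ?_
    rw [Polynomial.aeval_monomial]
    congr 1
    rw [Finsupp.sum, Finset.prod_congr rfl fun i _ => (pow_mul t (B ^ i) (d i)).symm,
      Finset.prod_pow_eq_pow_sum]
    congr 1
    exact Finset.sum_congr rfl fun i _ => mul_comm _ _
  have h2 := (transcendental_iff.mp ht) _ h1
  by_contra hne
  obtain ⟨d, hd⟩ := MvPolynomial.support_nonempty.mpr hne
  have h3 := congrArg (fun q => Polynomial.coeff q (d.sum fun i k => k * B ^ i)) h2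
  simp only [Polynomial.finsetSum_coeff, Polynomial.coeff_monomial, Polynomial.coeff_zero] at h3
  rw [Finset.sum_eq_single d] at h3
  · simp only [if_true] at h3
    exact MvPolynomial.mem_support_iff.mp hd h3
  · intro e he hed
    rw [if_neg]
    intro h
    exact hed (digits_inj' B e d (hP e he) (hP d hd) h)
  · intro h; exact absurd hd h

end PairACF


namespace PairACF

open Filter

theorem germ_isAlgClosed {K : Type} [Field K] [IsAlgClosed K] (u : Ultrafilter ℕ) :
    IsAlgClosed (Germ (u : Filter ℕ) K) := by
  refine IsAlgClosed.of_exists_root _ fun q hq hirr => ?_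
  let φ : (ℕ → K) →+* Germ (u : Filter ℕ) K := Germ.coeRingHom (u : Filter ℕ)
  have hφ : Function.Surjective φ := fun x => Germ.inductionOn x fun f => ⟨f, rfl⟩
  have hl : q ∈ Polynomial.lifts φ := by
    rw [Polynomial.mem_lifts]
    exact Polynomial.map_surjective φ hφ q
  obtain ⟨Q, hQ, hdeg, hmon⟩ := Polynomial.lifts_and_natDegree_eq_and_monic hl hq
  have hpos : 0 < q.natDegree := hirr.natDegree_pos
  have hroot : ∀ n : ℕ, ∃ y : K, (Q.map (Pi.evalRingHom (fun _ => K) n)).eval y = 0 := by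
    intro n
    refine IsAlgClosed.exists_root _ ?_
    have := hmon.natDegree_map (Pi.evalRingHom (fun _ => K) n)
    intro hd
    have h2 := Polynomial.natDegree_eq_of_degree_eq_some (n := 0) hd
    omega
  choose y hy using hroot
  refine ⟨φ y, ?_⟩
  rw [← hQ, Polynomial.eval_map_apply]
  have : Q.eval y = 0 := by
    funext n
    have h := hy n
    have h3 : y n = Pi.evalRingHom (fun _ => K) n y := rfl
    rw [h3, Polynomial.eval_map_apply] at h
    exact h
  rw [this, map_zero]

/-- The ring homomorphism between ultrapowers. -/
def germHom {K M : Type} [Field K] [Field M] (u : Ultrafilter ℕ) (f : K →+* M) :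
    Germ (u : Filter ℕ) K →+* Germ (u : Filter ℕ) M where
  toFun := Germ.map f
  map_one' := by
    change ((fun n => f ((1 : ℕ → K) n) : ℕ → M) : Germ (u : Filter ℕ) M) = ((1 : ℕ → M) : Germ (u : Filter ℕ) M)
    congr 1; funext n; simp
  map_zero' := by
    change ((fun n => f ((0 : ℕ → K) n) : ℕ → M) : Germ (u : Filter ℕ) M) = ((0 : ℕ → M) : Germ (u : Filter ℕ) M)
    congr 1; funext n; simp
  map_add' x y := by
    refine Germ.inductionOn₂ x y fun a b => ?_
    change ((fun n => f ((a + b) n) : ℕ → M) : Germ (u : Filter ℕ) M) =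
      (((fun n => f (a n)) + (fun n => f (b n)) : ℕ → M) : Germ (u : Filter ℕ) M)
    congr 1; funext n; simp
  map_mul' x y := by
    refine Germ.inductionOn₂ x y fun a b => ?_
    change ((fun n => f ((a * b) n) : ℕ → M) : Germ (u : Filter ℕ) M) =
      (((fun n => f (a n)) * (fun n => f (b n)) : ℕ → M) : Germ (u : Filter ℕ) M)
    congr 1; funext n; simp

theorem germHom_coe {K M : Type} [Field K] [Field M] (u : Ultrafilter ℕ) (f : K →+* M)
    (a : ℕ → K) : germHom u f (a : Germ (u : Filter ℕ) K) =
      ((fun n => f (a n) : ℕ → M) : Germ (u : Filter ℕ) M) := rfl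

theorem germ_uncountable {K : Type} [Infinite K] :
    ¬ Countable (Germ (hyperfilter ℕ : Filter ℕ) K) := by
  intro h
  obtain ⟨g, hg⟩ := exists_surjective_nat (Germ (hyperfilter ℕ : Filter ℕ) K)
  have hl : ∀ k, ∃ f : ℕ → K, (f : Germ (hyperfilter ℕ : Filter ℕ) K) = g k :=
    fun k => Germ.inductionOn (g k) fun f => ⟨f, rfl⟩
  choose f hf using hl
  classical
  have hnew : ∀ n, ∃ y : K, y ∉ (Finset.range (n + 1)).image (fun k => f k n) := by
    exact fun n => Infinite.exists_notMem_finset _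
  choose y hy using hnew
  obtain ⟨k, hk⟩ := hg (y : Germ (hyperfilter ℕ : Filter ℕ) K)
  rw [← hf, Germ.coe_eq] at hk
  have h2 : ∀ᶠ n in (hyperfilter ℕ : Filter ℕ), k ≤ n :=
    (Nat.hyperfilter_le_atTop) (eventually_ge_atTop k)
  obtain ⟨n, hn1, hn2⟩ := (hk.and h2).exists
  refine hy n ?_
  rw [Finset.mem_image]
  exact ⟨k, Finset.mem_range.mpr (by omega), hn1⟩

theorem germ_independent {K M : Type} [Field K] [Field M] [Algebra K M]
    (t : M) (ht : Transcendental K t)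
    [Algebra (Germ (hyperfilter ℕ : Filter ℕ) K) (Germ (hyperfilter ℕ : Filter ℕ) M)]
    (halg : algebraMap (Germ (hyperfilter ℕ : Filter ℕ) K) (Germ (hyperfilter ℕ : Filter ℕ) M) =
      germHom (hyperfilter ℕ) (algebraMap K M)) :
    ∃ b : ℕ → Germ (hyperfilter ℕ : Filter ℕ) M,
      AlgebraicIndependent (Germ (hyperfilter ℕ : Filter ℕ) K) b := by
  let b : ℕ → ℕ → M := fun i n => t ^ ((n + 1) ^ i)
  refine ⟨fun i => (b i : Germ (hyperfilter ℕ : Filter ℕ) M), ?_⟩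
  rw [algebraicIndependent_iff]
  intro P hP
  let φ : (ℕ → K) →+* Germ (hyperfilter ℕ : Filter ℕ) K := Germ.coeRingHom _
  let ψ : (ℕ → M) →+* Germ (hyperfilter ℕ : Filter ℕ) M := Germ.coeRingHom _
  have hφ : Function.Surjective φ := fun x => Germ.inductionOn x fun f => ⟨f, rfl⟩
  obtain ⟨Q, rfl⟩ := MvPolynomial.map_surjective φ hφ P
  let j : (ℕ → K) →+* (ℕ → M) :=
    RingHom.pi fun n => (algebraMap K M).comp (Pi.evalRingHom (fun _ => K) n)
  have hcomp : (germHom (hyperfilter ℕ) (algebraMap K M)).comp φ = ψ.comp j := rfl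
  have h1 : ψ (MvPolynomial.eval₂Hom j b Q) = 0 := by
    rw [MvPolynomial.map_eval₂Hom, ← hcomp, ← halg, ← hP, ← MvPolynomial.eval₂Hom_map_hom]
    rfl
  have h2 : ∀ᶠ n in (hyperfilter ℕ : Filter ℕ), (MvPolynomial.eval₂Hom j b Q) n = 0 :=
    Germ.coe_eq.mp h1
  obtain ⟨N, hN⟩ : ∃ N, ∀ d ∈ Q.support, ∀ i, d i < N + 1 := by
    refine ⟨Q.totalDegree, fun d hd i => Nat.lt_succ_of_le ?_⟩
    refine le_trans ?_ (MvPolynomial.le_totalDegree hd)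
    by_cases hi : i ∈ d.support
    · exact Finset.single_le_sum (f := fun i => d i) (fun _ _ => Nat.zero_le _) hi
    · rw [Finsupp.notMem_support_iff.mp hi]; exact Nat.zero_le _
  have h3 : ∀ᶠ n in (hyperfilter ℕ : Filter ℕ), N ≤ n :=
    (Nat.hyperfilter_le_atTop) (eventually_ge_atTop N)
  have h4 : ∀ᶠ n in (hyperfilter ℕ : Filter ℕ),
      MvPolynomial.map (Pi.evalRingHom (fun _ => K) n) Q = 0 := by
    filter_upwards [h2, h3] with n hn1 hn2
    refine kronecker t ht (n + 1) _ ?_ ?_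
    · intro d hd i
      have := hN d (MvPolynomial.support_map_subset _ _ hd) i
      omega
    · have h5 : Pi.evalRingHom (fun _ => M) n (MvPolynomial.eval₂Hom j b Q) = 0 := hn1
      rw [MvPolynomial.map_eval₂Hom] at h5
      rw [← h5]
      have h6 : (Pi.evalRingHom (fun _ => M) n).comp j =
        (algebraMap K M).comp (Pi.evalRingHom (fun _ => K) n) := rfl
      rw [h6, ← MvPolynomial.eval₂Hom_map_hom]
      rfl
  ext d
  rw [MvPolynomial.coeff_map, MvPolynomial.coeff_zero]
  refine Germ.coe_eq.mpr ?_
  filter_upwards [h4] with n hn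
  have := congrArg (MvPolynomial.coeff d) hn
  rwa [MvPolynomial.coeff_map] at this

end PairACF


namespace PairACF

open Filter FirstOrder.Language.Structure

theorem elemEquiv_of_ringEquiv {E E' : Type} [Field E] [Field E'] (P : Set E) (P' : Set E')
    (e : E ≃+* E') (h : ∀ x, x ∈ P ↔ e x ∈ P') :
    @FirstOrder.Language.ElementarilyEquivalent LRingP E E'
      (ringPairStr E P) (ringPairStr E' P') := by
  let _ := ringPairStr E P
  let _ := ringPairStr E' P'
  let f : E ≃[LRingP] E' :=
    { toEquiv := e.toEquiv
      map_fun' := by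
        intro n f x
        match n, f with
        | 0, c =>
          change e (if (show Fin 2 from c) = 0 then 0 else 1) =
            (if (show Fin 2 from c) = 0 then 0 else 1)
          split_ifs <;> simp
        | 1, _ => exact map_neg e (x 0)
        | 2, c =>
          change e (if (show Fin 2 from c) = 0 then x 0 + x 1 else x 0 * x 1) =
            (if (show Fin 2 from c) = 0 then e (x 0) + e (x 1) else e (x 0) * e (x 1))
          split_ifs <;> simp
        | _ + 3, c => exact nomatch c
      map_rel' := by
        intro n r x
        match n, r with
        | 0, r => exact nomatch r
        | 1, _ => exact (h (x 0)).symm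
        | _ + 2, r => exact nomatch r }
  exact StrongHomClass.elementarilyEquivalent f

/-- The ultrapower of a pair is elementarily equivalent to it. -/
theorem elemEquiv_germ {M : Type} [Field M] (u : Ultrafilter ℕ) (P : Set M)
    (P' : Set (Germ (u : Filter ℕ) M))
    (hP : ∀ f : ℕ → M, (f : Germ (u : Filter ℕ) M) ∈ P' ↔ ∀ᶠ n in (u : Filter ℕ), f n ∈ P) :
    @FirstOrder.Language.ElementarilyEquivalent LRingP M (Germ (u : Filter ℕ) M)
      (ringPairStr M P) (ringPairStr _ P') := by
  let _ := ringPairStr M P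
  let _ := ringPairStr (Germ (u : Filter ℕ) M) P'
  let e : (u : Filter ℕ).Product (fun _ => M) ≃ Germ (u : Filter ℕ) M :=
    Quotient.congrRight fun _ _ => Iff.rfl
  have he : ∀ f : ℕ → M, e (Quotient.mk (productSetoid (u : Filter ℕ) (fun _ => M)) f) =
    (f : Germ (u : Filter ℕ) M) := fun f => rfl
  let g : (u : Filter ℕ).Product (fun _ => M) ≃[LRingP] Germ (u : Filter ℕ) M :=
    { toEquiv := e
      map_fun' := by
        intro n f x
        have hx : ∀ i, ∃ a : ℕ → M, Quotient.mk (productSetoid (u : Filter ℕ) (fun _ => M)) a = x i :=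
          fun i => Quotient.exists_rep (x i)
        choose a ha using hx
        obtain rfl : (fun i => Quotient.mk (productSetoid (u : Filter ℕ) (fun _ => M)) (a i)) = x :=
          funext ha
        have key := Ultraproduct.funMap_cast (u := u) (M := fun _ : ℕ => M) f a
        refine (congrArg e key).trans ?_
        match n, f with
        | 0, c =>
          change ((fun _ => if (show Fin 2 from c) = 0 then 0 else 1 : ℕ → M) :
            Germ (u : Filter ℕ) M) = (if (show Fin 2 from c) = 0 then 0 else 1)
          split_ifs <;> rfl
        | 1, _ => rfl
        | 2, c =>
          change ((fun n => if (show Fin 2 from c) = 0 then a 0 n + a 1 n else a 0 n * a 1 n :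
            ℕ → M) : Germ (u : Filter ℕ) M) = (if (show Fin 2 from c) = 0 then
            (a 0 : Germ (u : Filter ℕ) M) + (a 1 : Germ (u : Filter ℕ) M) else
            (a 0 : Germ (u : Filter ℕ) M) * (a 1 : Germ (u : Filter ℕ) M))
          split_ifs <;> rfl
        | _ + 3, c => exact nomatch c
      map_rel' := by
        intro n r x
        have hx : ∀ i, ∃ a : ℕ → M, Quotient.mk (productSetoid (u : Filter ℕ) (fun _ => M)) a = x i :=
          fun i => Quotient.exists_rep (x i)
        choose a ha using hx
        obtain rfl : (fun i => Quotient.mk (productSetoid (u : Filter ℕ) (fun _ => M)) (a i)) = x :=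
          funext ha
        have key := relMap_quotient_mk' (L := LRingP) (productSetoid (u : Filter ℕ) (fun _ => M)) r a
        refine Iff.trans ?_ key.symm
        match n, r with
        | 0, r => exact nomatch r
        | 1, _ => exact hP (a 0)
        | _ + 2, r => exact nomatch r }
  have h1 := StrongHomClass.elementarilyEquivalent g
  rw [elementarilyEquivalent_iff] at h1 ⊢
  intro φ
  rw [← h1, Ultraproduct.sentence_realize]
  simp

section LS

variable {U : Type} [Field U]

/-- Polynomials over `S` are given by terms. -/
theorem exists_term [i : LRingP.Structure U] {P : Set U} (hi : i = ringPairStr U P)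
    (S : Subring U) (q : Polynomial S) :
    ∃ t : LRingP.Term (S ⊕ Fin 1), ∀ y : U, ∀ v : Fin 1 → U, v 0 = y →
      t.realize (Sum.elim (fun s : S => (s : U)) v) = (q.map S.subtype).eval y := by
  subst hi
  let _ := ringPairStr U P
  have hmul : ∀ t₁ t₂ : LRingP.Term (S ⊕ Fin 1), ∃ t : LRingP.Term (S ⊕ Fin 1), ∀ v : _ → U,
      t.realize v = t₁.realize v * t₂.realize v := fun t₁ t₂ =>
    ⟨Term.func (show LRingP.Functions 2 from (1 : Fin 2)) ![t₁, t₂], fun v => rfl⟩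
  have hadd : ∀ t₁ t₂ : LRingP.Term (S ⊕ Fin 1), ∃ t : LRingP.Term (S ⊕ Fin 1), ∀ v : _ → U,
      t.realize v = t₁.realize v + t₂.realize v := fun t₁ t₂ =>
    ⟨Term.func (show LRingP.Functions 2 from (0 : Fin 2)) ![t₁, t₂], fun v => rfl⟩
  induction q using Polynomial.induction_on with
  | C a => exact ⟨Term.var (Sum.inl a), fun y v hv => by simp⟩
  | add p q hp hq =>
    obtain ⟨t₁, h₁⟩ := hp
    obtain ⟨t₂, h₂⟩ := hq
    obtain ⟨t, ht⟩ := hadd t₁ t₂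
    exact ⟨t, fun y v hv => by rw [ht, h₁ y v hv, h₂ y v hv]; simp⟩
  | monomial n a h =>
    obtain ⟨t₁, h₁⟩ := h
    obtain ⟨t, ht⟩ := hmul t₁ (Term.var (Sum.inr 0))
    exact ⟨t, fun y v hv => by rw [ht, h₁ y v hv]; simp [hv, pow_succ, mul_assoc]⟩

theorem exists_root_mem [i : LRingP.Structure U] {P : Set U} (hi : i = ringPairStr U P)
    (S : LRingP.ElementarySubstructure U) (R : Subring U) (hR : (R : Set U) = S)
    (q : Polynomial R) (y : U) (hy : (q.map R.subtype).eval y = 0) :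
    ∃ z ∈ R, (q.map R.subtype).eval z = 0 := by
  obtain ⟨t, ht⟩ := exists_term hi R q
  obtain ⟨t0, ht0⟩ := exists_term hi R 0
  let φ : LRingP.BoundedFormula R 1 := t.bdEqual t0
  have hφ : ∀ z : U, φ.Realize (fun s : R => (s : U)) (fun _ => z) ↔
      (q.map R.subtype).eval z = 0 := by
    intro z
    simp only [φ, BoundedFormula.realize_bdEqual]
    rw [ht z _ rfl, ht0 z _ rfl]
    simp
  have hm : ∀ x : R, (x : U) ∈ S := fun x => by
    rw [← SetLike.mem_coe, ← hR]; exact x.2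
  let v : R → S := fun x => ⟨x, hm x⟩
  have h1 : φ.ex.Realize (S.subtype ∘ v) (S.subtype ∘ (default : Fin 0 → S)) := by
    rw [BoundedFormula.realize_ex]
    refine ⟨y, ?_⟩
    have : (Fin.snoc (S.subtype ∘ (default : Fin 0 → S)) y : Fin 1 → U) = fun _ => y := by
      funext k
      rw [Subsingleton.elim (α := Fin 1) k (Fin.last 0), Fin.snoc_last]
    rw [this]
    exact (hφ y).mpr hy
  rw [S.subtype.map_boundedFormula, BoundedFormula.realize_ex] at h1
  obtain ⟨z, hz⟩ := h1
  rw [← S.subtype.map_boundedFormula] at hz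
  refine ⟨z, ?_, (hφ z).mp ?_⟩
  · rw [← SetLike.mem_coe, hR]; exact z.2
  · have : (S.subtype ∘ (Fin.snoc (default : Fin 0 → S) z : Fin 1 → S)) = fun _ => (z : U) := by
      funext k
      rw [Subsingleton.elim (α := Fin 1) k (Fin.last 0), Function.comp_apply, Fin.snoc_last]
      rfl
    rw [← this]
    exact hz

/-- Elementary substructures are algebraically closed subfields. -/
theorem exists_subfield [IsAlgClosed U] [i : LRingP.Structure U] {P : Set U}
    (hi : i = ringPairStr U P) (S : LRingP.ElementarySubstructure U) :
    ∃ N : Subfield U, (N : Set U) = S ∧ IsAlgClosed N := by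
  have hc : ∀ {n : ℕ} (f : LRingP.Functions n) (x : Fin n → U), (∀ k, x k ∈ S) →
      funMap f x ∈ S := fun f x hx => S.toSubstructure.fun_mem f x hx
  let R : Subring U :=
    { carrier := S
      zero_mem' := by
        have := hc (show LRingP.Functions 0 from (0 : Fin 2)) ![] (by simp)
        subst hi; exact this
      one_mem' := by
        have := hc (show LRingP.Functions 0 from (1 : Fin 2)) ![] (by simp)
        subst hi; exact this
      add_mem' := by
        intro a b ha hb
        have := hc (show LRingP.Functions 2 from (0 : Fin 2)) ![a, b]
          (by intro k; fin_cases k; exacts [ha, hb])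
        subst hi; exact this
      mul_mem' := by
        intro a b ha hb
        have := hc (show LRingP.Functions 2 from (1 : Fin 2)) ![a, b]
          (by intro k; fin_cases k; exacts [ha, hb])
        subst hi; exact this
      neg_mem' := by
        intro a ha
        have := hc (show LRingP.Functions 1 from ()) ![a]
          (by intro k; fin_cases k; exact ha)
        subst hi; exact this }
  have hroot := exists_root_mem hi S R rfl
  let N : Subfield U :=
    { R with
      inv_mem' := by
        intro x hx
        by_cases h0 : x = 0
        · subst h0; simp
        obtain ⟨z, hz, hz0⟩ := hroot (Polynomial.C ⟨x, hx⟩ * Polynomial.X - 1) x⁻¹ (by simp [h0])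
        have : x⁻¹ = z := by
          simp at hz0
          exact inv_eq_of_mul_eq_one_right (by linear_combination hz0)
        rw [this]; exact hz }
  refine ⟨N, rfl, IsAlgClosed.of_exists_root _ fun q hq hirr => ?_⟩
  obtain ⟨y, hy⟩ := IsAlgClosed.exists_root (q.map N.subtype) (by
    rw [Polynomial.degree_map]
    exact hirr.degree_pos.ne')
  obtain ⟨z, hz, hz0⟩ := hroot q y hy
  refine ⟨⟨z, hz⟩, N.subtype.injective ?_⟩
  rw [map_zero, ← Polynomial.eval_map_apply]
  exact hz0

end LS

end PairACF


namespace PairACF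

open Filter FirstOrder.Language.Structure

theorem mem_range_of_isIntegral {F E : Type} [Field F] [Field E] [Algebra F E] [IsAlgClosed F]
    {x : E} (hx : IsIntegral F x) : x ∈ Set.range (algebraMap F E) :=
  minpoly.mem_range_of_degree_eq_one F x
    (IsAlgClosed.degree_eq_one_of_irreducible F (minpoly.irreducible hx))

theorem card_LRingP : LRingP.card ≤ Cardinal.aleph0 := by
  have h1 : ∀ n, Countable (LRingP.Functions n) := fun n =>
    match n with
    | 0 => inferInstanceAs (Countable (Fin 2))
    | 1 => inferInstanceAs (Countable Unit)
    | 2 => inferInstanceAs (Countable (Fin 2))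
    | _ + 3 => inferInstanceAs (Countable Empty)
  have h2 : ∀ n, Countable (LRingP.Relations n) := fun n =>
    match n with
    | 0 => inferInstanceAs (Countable Empty)
    | 1 => inferInstanceAs (Countable Unit)
    | _ + 2 => inferInstanceAs (Countable Empty)
  have h3 : Countable LRingP.Symbols :=
    inferInstanceAs (Countable ((Σ l, LRingP.Functions l) ⊕ (Σ l, LRingP.Relations l)))
  exact Cardinal.mk_le_aleph0_iff.mpr h3

/-- Downward Löwenheim–Skolem for pairs. -/
theorem exists_countable {F E : Type} [Field F] [Field E] [Algebra F E] [IsAlgClosed F]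
    [IsAlgClosed E] (s : Set E) (hs : s.Countable) :
    ∃ N : Subfield E, s ⊆ N ∧ Countable N ∧ IsAlgClosed N ∧
      @FirstOrder.Language.ElementarilyEquivalent LRingP E N
        (ringPairStr E (Set.range (algebraMap F E)))
        (ringPairStr N {x | (x : E) ∈ Set.range (algebraMap F E)}) := by
  let i := ringPairStr E (Set.range (algebraMap F E))
  have : Infinite E := inferInstance
  obtain ⟨S, hsS, hcard⟩ := exists_elementarySubstructure_card_eq LRingP (M := E) s Cardinal.aleph0.{0}
    le_rfl (by simpa using hs) (by simpa using card_LRingP) (by simp)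
  obtain ⟨N, hN, hcl⟩ := exists_subfield (U := E) (i := i) rfl S
  have hcS : Countable S := by
    rw [← Cardinal.mk_le_aleph0_iff]
    simpa using hcard.le
  have hmem : ∀ x, x ∈ S ↔ x ∈ N := fun x => by
    rw [← SetLike.mem_coe, ← SetLike.mem_coe, hN]
  let e : S ≃ N := Equiv.subtypeEquivRight hmem
  refine ⟨N, hN ▸ hsS, e.symm.injective.countable, hcl, ?_⟩
  let _ := ringPairStr N {x | (x : E) ∈ Set.range (algebraMap F E)}
  let f : S ≃[LRingP] N :=
    { toEquiv := e
      map_fun' := by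
        intro n f x
        apply Subtype.ext
        match n, f with
        | 0, c =>
          change (if (show Fin 2 from c) = 0 then (0 : E) else 1) =
            ((if (show Fin 2 from c) = 0 then (0 : N) else 1 : N) : E)
          split_ifs <;> simp
        | 1, _ => rfl
        | 2, c =>
          change (if (show Fin 2 from c) = 0 then (x 0 : E) + x 1 else (x 0 : E) * x 1) =
            ((if (show Fin 2 from c) = 0 then e (x 0) + e (x 1) else e (x 0) * e (x 1) : N) : E)
          split_ifs <;> rfl
        | _ + 3, c => exact nomatch c
      map_rel' := by
        intro n r x
        match n, r with
        | 0, r => exact nomatch r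
        | 1, _ => exact Iff.rfl
        | _ + 2, r => exact nomatch r }
  have h1 : S ≅[LRingP] E := S.elementarilyEquivalent
  exact h1.symm.trans (StrongHomClass.elementarilyEquivalent f)

theorem exists_good (p : ℕ) (hp : p = 0 ∨ p.Prime) (M : Type) [Field M] [IsAlgClosed M] [CharP M p]
    (K : Subfield M) (hK : IsAlgClosed K) (hKproper : (K : Set M) ≠ Set.univ) :
    ∃ (F E : Type) (_ : Field F) (_ : Field E) (_ : Algebra F E) (_ : Algebra (ZMod p) F),
      IsAlgClosed F ∧ IsAlgClosed E ∧ Countable E ∧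
      (∃ a : ℕ → F, AlgebraicIndependent (ZMod p) a) ∧ (∃ b : ℕ → E, AlgebraicIndependent F b) ∧
      @FirstOrder.Language.ElementarilyEquivalent LRingP M E
        (ringPairStr M (K : Set M)) (ringPairStr E (Set.range (algebraMap F E))) := by
  obtain ⟨t, ht⟩ := (Set.ne_univ_iff_exists_notMem _).mp hKproper
  have ht' : Transcendental K t := by
    intro halg
    obtain ⟨y, hy⟩ := mem_range_of_isIntegral halg.isIntegral
    exact ht (hy ▸ y.2)
  let u : Ultrafilter ℕ := hyperfilter ℕ
  let F := Germ (u : Filter ℕ) K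
  let E := Germ (u : Filter ℕ) M
  have hF : IsAlgClosed F := germ_isAlgClosed u
  have hE : IsAlgClosed E := germ_isAlgClosed u
  let _ : Algebra F E := (germHom u (algebraMap K M)).toAlgebra
  have halg : algebraMap F E = germHom u (algebraMap K M) := rfl
  have : CharP K p := (algebraMap K M).charP_iff_charP p |>.mpr inferInstance
  let c : K →+* F := (Germ.coeRingHom (u : Filter ℕ)).comp (Pi.constRingHom ℕ K)
  have : CharP F p := (c.charP_iff_charP p).mp inferInstance
  let _ : Algebra (ZMod p) F := ZMod.algebra F p
  have : Nontrivial (ZMod p) := by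
    rcases hp with rfl | hp
    · exact inferInstanceAs (Nontrivial ℤ)
    · have := Fact.mk hp
      infer_instance
  have hcz : Countable (ZMod p) := by
    cases p with
    | zero => exact inferInstanceAs (Countable ℤ)
    | succ n => exact inferInstanceAs (Countable (Fin (n + 1)))
  -- independent elements
  obtain ⟨b, hb⟩ := germ_independent t ht' halg
  have hFf : FaithfulSMul (ZMod p) F := by
    rw [faithfulSMul_iff_algebraMap_injective]
    exact ZMod.castHom_injective F
  obtain ⟨B, hB⟩ := exists_isTranscendenceBasis (ZMod p) F
  have hunc : Cardinal.aleph0 < Cardinal.mk F := by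
    rw [← not_le, Cardinal.mk_le_aleph0_iff]
    have : Infinite K := inferInstance
    exact germ_uncountable
  have hBc : Cardinal.mk F = Cardinal.mk B :=
    IsAlgClosed.cardinal_eq_cardinal_transcendence_basis_of_aleph0_lt' _ hB
      (Cardinal.mk_le_aleph0_iff.mpr hcz) hunc
  have hBinf : Infinite B := by
    rw [Cardinal.infinite_iff, ← hBc]; exact hunc.le
  let a : ℕ → F := fun n => (Infinite.natEmbedding B n : F)
  have ha : AlgebraicIndependent (ZMod p) a :=
    hB.1.comp (Infinite.natEmbedding B) (Infinite.natEmbedding B).injective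
  -- elementary equivalence with the ultrapower
  have hel : @FirstOrder.Language.ElementarilyEquivalent LRingP M E
      (ringPairStr M (K : Set M)) (ringPairStr E (Set.range (algebraMap F E))) := by
    refine elemEquiv_germ u _ _ fun f => ⟨?_, fun h => ?_⟩
    · rintro ⟨x, hx⟩
      revert hx
      refine Germ.inductionOn x fun g hg => ?_
      rw [halg, germHom_coe, Germ.coe_eq] at hg
      filter_upwards [hg] with n hn
      rw [← hn]
      exact (g n).2
    · classical
      let g : ℕ → K := fun n => if hn : f n ∈ K then ⟨f n, hn⟩ else 0
      refine ⟨(g : Germ (u : Filter ℕ) K), ?_⟩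
      rw [halg, germHom_coe, Germ.coe_eq]
      filter_upwards [h] with n hn
      have hn' : f n ∈ K := hn
      simp only [g, dif_pos hn']
      rfl
  obtain ⟨N, hsN, hNc, hNcl, hNel⟩ := exists_countable (F := F) (E := E)
    (Set.range b ∪ Set.range (algebraMap F E ∘ a))
    ((Set.countable_range b).union (Set.countable_range _))
  let F₀ : Subfield F := N.comap (algebraMap F E)
  let j : F₀ →+* N := ((algebraMap F E).comp F₀.subtype).codRestrict N fun x => x.2
  let _ : Algebra F₀ N := j.toAlgebra
  have hj : ∀ x : F₀, ((algebraMap F₀ N x : N) : E) = algebraMap F E x := fun x => rfl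
  have hF₀ : IsAlgClosed F₀ := by
    refine IsAlgClosed.of_exists_root _ fun q hq hirr => ?_
    obtain ⟨z, hz⟩ := IsAlgClosed.exists_root (q.map (algebraMap F₀ N)) (by
      rw [Polynomial.degree_map]
      exact hirr.degree_pos.ne')
    have hz' : Polynomial.eval₂ (algebraMap F₀ N) z q = 0 := by
      rwa [Polynomial.IsRoot, Polynomial.eval_map] at hz
    have hz2 := congrArg N.subtype hz'
    rw [Polynomial.hom_eval₂, map_zero] at hz2
    have hcomp : N.subtype.comp (algebraMap F₀ N) = (algebraMap F E).comp F₀.subtype := rfl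
    rw [hcomp, ← Polynomial.eval₂_map] at hz2
    obtain ⟨w, hw⟩ := mem_range_of_isIntegral (F := F) (x := (z : E))
      ⟨q.map F₀.subtype, hq.map _, hz2⟩
    have hwm : w ∈ F₀ := by
      change algebraMap F E w ∈ N
      rw [hw]; exact z.2
    refine ⟨⟨w, hwm⟩, (algebraMap F₀ N).injective ?_⟩
    have hzw : algebraMap F₀ N ⟨w, hwm⟩ = z := Subtype.ext hw
    rw [map_zero, ← Polynomial.eval_map_apply, hzw]
    exact hz
  have : CharP F₀ p := (F₀.subtype.charP_iff_charP p).mpr inferInstance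
  let _ : Algebra (ZMod p) F₀ := ZMod.algebra F₀ p
  refine ⟨F₀, N, inferInstance, inferInstance, inferInstance, inferInstance, hF₀, hNcl, hNc,
    ⟨fun n => ⟨a n, hsN (Or.inr ⟨n, rfl⟩)⟩, ?_⟩, ⟨fun n => ⟨b n, hsN (Or.inl ⟨n, rfl⟩)⟩, ?_⟩, ?_⟩
  · exact AlgebraicIndependent.of_ringHom_of_comp_eq (RingHom.id (ZMod p)) F₀.subtype ha
      Function.injective_id (Subsingleton.elim _ _)
  · exact AlgebraicIndependent.of_ringHom_of_comp_eq F₀.subtype N.subtype hb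
      F₀.subtype.injective rfl
  · have hset : {x : N | (x : E) ∈ Set.range (algebraMap F E)} = Set.range (algebraMap F₀ N) := by
      ext x
      constructor
      · rintro ⟨y, hy⟩
        have hym : y ∈ F₀ := by
          change algebraMap F E y ∈ N
          rw [hy]; exact x.2
        exact ⟨⟨y, hym⟩, Subtype.ext hy⟩
      · rintro ⟨y, rfl⟩
        exact ⟨y, rfl⟩
    rw [← hset]
    exact Eq.trans hel hNel

end PairACF

/-- Fix `p` equal to `0` or a prime.  Any two proper pairs of algebraically
closed fields of characteristic `p` are elementarily equivalent in the language of rings with a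
predicate for the subfield; in particular the theory of proper pairs of algebraically closed
fields of a fixed characteristic is complete. -/
theorem proper_pairs_of_algebraically_closed_fields_elementarilyEquivalent
    (p : ℕ) (hp : p = 0 ∨ p.Prime)
    (M M' : Type) [Field M] [Field M'] [IsAlgClosed M] [IsAlgClosed M']
    [CharP M p] [CharP M' p]
    (K : Subfield M) (K' : Subfield M')
    (hK : IsAlgClosed K) (hK' : IsAlgClosed K')
    (hKproper : (K : Set M) ≠ Set.univ) (hK'proper : (K' : Set M') ≠ Set.univ) :
    @FirstOrder.Language.ElementarilyEquivalent LRingP M M'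
      (ringPairStr M (K : Set M)) (ringPairStr M' (K' : Set M')) := by
  obtain ⟨F, E, _, _, _, _, _, _, _, ⟨a, ha⟩, ⟨b, hb⟩, h⟩ :=
    PairACF.exists_good p hp M K hK hKproper
  obtain ⟨F', E', _, _, _, _, _, _, _, ⟨a', ha'⟩, ⟨b', hb'⟩, h'⟩ :=
    PairACF.exists_good p hp M' K' hK' hK'proper
  obtain ⟨f, hf⟩ := PairACF.exists_pair_equiv a ha a' ha' b hb b' hb'
  exact Eq.trans h (Eq.trans (PairACF.elemEquiv_of_ringEquiv _ _ f hf) (Eq.symm h'))
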